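/- arXiv:2401.08013 — 3 statements merged into one kernel-verified Lean document; each statement's English description precedes it below -/
import Mathlib

section
/- Let p^0 = q_r(s^0) be the initial strategy of the CULO model for some finite s^0, and suppose the CULO iterates p^t converge to a point p* ∈ P*. Then p* is the KL projection of p^0 onto P*: p* minimizes D(·, p^0) over P*. -/
/-!
The idea is that the demand-weighted pairing of the log-probabilities with the difference
of two equilibria never changes along the dynamics.

The demand-weighted form of the equilibrium inequality (`weighted_vi`) and strict monotonicity
show that any two equilibria `p'`, `p*` induce the same link flow (`linkFlow_unique`). Hence
`∑ q_k (p'_k - p*_k) c_k(p) = ⟨u(bΛ p), bΛ (p' - p*)⟩ = 0` for every `p`, so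
`∑ q_k (p'_k - p*_k) s^t_k` does not depend on `t`. Since `log p^t_k` is `-r s^t_k` up to a term
depending only on the OD pair, `∑ q_k (p'_k - p*_k) log p^t_k` does not depend on `t` either, and so
`D(p', p^0) - D(p*, p^0) = D(p', p^t) - D(p*, p^t)` for all `t`. Here `D(p', p^t) ≥ 0` (the Gibbs
inequality, `KLdiv_nonneg`), while `D(p*, p^t) → 0` because `p^t → p*`.
-/

open Matrix Filter Finset Topology

noncomputable section

variable {A W K : Type*}

/-- OD-route incidence matrix `Σ`: each column is the standard unit vector at `od k`
(every route `k` serves exactly one OD pair, `od k`). -/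
def Sig [DecidableEq W] (od : K → W) : Matrix W K ℝ :=
  Matrix.of fun w k => if od k = w then 1 else 0

/-- The strategy set `P = {p : p ≥ 0, Σ p = 1}`. -/
def Pset [Fintype K] [DecidableEq W] (od : K → W) : Set (K → ℝ) :=
  {p | (∀ k, 0 ≤ p k) ∧ ∀ w : W, (Sig od).mulVec p w = 1}

/-- `q = Σᵀ d`. -/
def qvec [Fintype W] [DecidableEq W] (od : K → W) (d : W → ℝ) : K → ℝ :=
  (Sig od)ᵀ.mulVec d

/-- `bΛ = Λ · diag q`. -/
def bLam [Fintype K] [Fintype W] [DecidableEq W] [DecidableEq K]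
    (Λ : Matrix A K ℝ) (od : K → W) (d : W → ℝ) : Matrix A K ℝ :=
  Λ * Matrix.diagonal (qvec od d)

/-- The link-flow set `X = {bΛ p : p ∈ P}`. -/
def Xset [Fintype K] [Fintype W] [DecidableEq W] [DecidableEq K]
    (Λ : Matrix A K ℝ) (od : K → W) (d : W → ℝ) : Set (A → ℝ) :=
  (fun p => (bLam Λ od d).mulVec p) '' Pset od

/-- The route-cost map `c(p) = Λᵀ u(bΛ p)`. -/
def routeCost [Fintype A] [Fintype K] [Fintype W] [DecidableEq W] [DecidableEq K]
    (Λ : Matrix A K ℝ) (od : K → W) (d : W → ℝ)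
    (u : (A → ℝ) → (A → ℝ)) : (K → ℝ) → (K → ℝ) :=
  fun p => Λᵀ.mulVec (u ((bLam Λ od d).mulVec p))

/-- The UE set `P*`: solutions of the variational inequality. -/
def UEset [Fintype A] [Fintype K] [Fintype W] [DecidableEq W] [DecidableEq K]
    (Λ : Matrix A K ℝ) (od : K → W) (d : W → ℝ)
    (u : (A → ℝ) → (A → ℝ)) : Set (K → ℝ) :=
  {p | p ∈ Pset od ∧ ∀ p' ∈ Pset od, 0 ≤ routeCost Λ od d u p ⬝ᵥ (p' - p)}

/-- The logit map `q_r`. -/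
def logit [Fintype K] [DecidableEq W] (od : K → W) (r : ℝ) (s : K → ℝ) : K → ℝ :=
  fun k => Real.exp (-r * s k) /
    ∑ k' ∈ Finset.univ.filter (fun k' => od k' = od k), Real.exp (-r * s k')

/-- The negative entropy `φ(p) = ∑ₖ qₖ pₖ log pₖ` (with `0·log 0 = 0`). -/
def negEnt [Fintype K] [Fintype W] [DecidableEq W] (od : K → W) (d : W → ℝ)
    (p : K → ℝ) : ℝ :=
  ∑ k, qvec od d k * (p k * Real.log (p k))

/-- The KL divergence `D(p, p') = ∑ₖ qₖ pₖ (log pₖ − log p'ₖ)` (with `0·log 0 = 0`). -/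
def KLdiv [Fintype K] [Fintype W] [DecidableEq W] (od : K → W) (d : W → ℝ)
    (p p' : K → ℝ) : ℝ :=
  ∑ k, qvec od d k * (p k * (Real.log (p k) - Real.log (p' k)))

lemma Sig_mulVec_apply [Fintype K] [DecidableEq W] (od : K → W) (z : K → ℝ) (w : W) :
    (Sig od).mulVec z w = ∑ k ∈ univ.filter (fun k => od k = w), z k := by
  simp [Sig, Matrix.mulVec, dotProduct, Finset.sum_filter]

lemma qvec_apply [Fintype W] [DecidableEq W] (od : K → W) (d : W → ℝ) (k : K) :
    qvec od d k = d (od k) := by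
  simp [qvec, Sig, Matrix.mulVec, dotProduct]

/-- Weights that are constant on each OD pair cannot distinguish two strategies. -/
lemma sum_od_mul_eq [Fintype K] [Fintype W] [DecidableEq W] (od : K → W) (g : W → ℝ)
    {z z' : K → ℝ} (h : ∀ w, (Sig od).mulVec z w = 1) (h' : ∀ w, (Sig od).mulVec z' w = 1) :
    ∑ k, g (od k) * (z k - z' k) = 0 := by
  rw [← Finset.sum_fiberwise univ od]
  refine Finset.sum_eq_zero fun w _ => ?_
  have hz := h w
  have hz' := h' w
  rw [Sig_mulVec_apply] at hz hz'
  calc ∑ k ∈ univ.filter (fun k => od k = w), g (od k) * (z k - z' k)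
      = ∑ k ∈ univ.filter (fun k => od k = w), g w * (z k - z' k) := by
        refine Finset.sum_congr rfl fun k hk => ?_
        rw [(Finset.mem_filter.1 hk).2]
    _ = 0 := by rw [← Finset.mul_sum, Finset.sum_sub_distrib, hz, hz']; ring

/-- The demand-weighted route-cost pairing is the link-cost pairing with the induced link flow. -/
lemma sum_qvec_routeCost [Fintype A] [Fintype K] [Fintype W] [DecidableEq W] [DecidableEq K]
    (Λ : Matrix A K ℝ) (od : K → W) (d : W → ℝ) (u : (A → ℝ) → (A → ℝ)) (p z : K → ℝ) :
    ∑ k, qvec od d k * (routeCost Λ od d u p k * z k)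
      = u ((bLam Λ od d).mulVec p) ⬝ᵥ (bLam Λ od d).mulVec z := by
  have h : (bLam Λ od d).mulVec z = Λ.mulVec (fun k => qvec od d k * z k) := by
    rw [bLam, ← Matrix.mulVec_mulVec]
    congr 1
    ext k
    rw [Matrix.mulVec_diagonal]
  rw [h, Matrix.dotProduct_mulVec, ← Matrix.mulVec_transpose]
  simp only [routeCost, dotProduct]
  exact Finset.sum_congr rfl fun k _ => by ring

/-- The equilibrium inequality still holds after weighting by demand: since `P` is a product of
simplices, one may move from `p` towards `p'` by a different amount in each OD pair. -/
lemma weighted_vi [Fintype A] [Fintype K] [Fintype W] [DecidableEq W] [DecidableEq K]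
    (Λ : Matrix A K ℝ) (od : K → W) (d : W → ℝ) (hd : ∀ w, 0 < d w)
    (u : (A → ℝ) → (A → ℝ)) {p p' : K → ℝ} (hp : p ∈ UEset Λ od d u) (hp' : p' ∈ Pset od) :
    0 ≤ ∑ k, qvec od d k * (routeCost Λ od d u p k * (p' k - p k)) := by
  obtain ⟨hp'0, hp'1⟩ := hp'
  obtain ⟨⟨hp0, hp1⟩, hvi⟩ := hp
  -- Any positive bound on the demands makes every step size `d w / M` at most one.
  set M : ℝ := 1 + ∑ w, d w with hM
  have hle : ∀ w, d w ≤ M := fun w => by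
    have := Finset.single_le_sum (fun i _ => (hd i).le) (Finset.mem_univ w)
    linarith
  have hMpos : 0 < M := by
    have := Finset.sum_nonneg (fun i (_ : i ∈ (univ : Finset W)) => (hd i).le)
    linarith
  have hmem : (fun k => p k + d (od k) / M * (p' k - p k)) ∈ Pset od := by
    refine ⟨fun k => ?_, fun w => ?_⟩
    · have h1 : d (od k) / M ≤ 1 := (div_le_one hMpos).2 (hle _)
      have h0 : 0 ≤ d (od k) / M := div_nonneg (hd _).le hMpos.le
      change 0 ≤ p k + d (od k) / M * (p' k - p k)
      nlinarith [mul_nonneg h0 (hp'0 k), mul_nonneg (sub_nonneg.2 h1) (hp0 k)]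
    · have h1 := hp1 w
      have h2 := hp'1 w
      rw [Sig_mulVec_apply] at h1 h2 ⊢
      calc ∑ k ∈ univ.filter (fun k => od k = w), (p k + d (od k) / M * (p' k - p k))
          = ∑ k ∈ univ.filter (fun k => od k = w), (p k + d w / M * (p' k - p k)) := by
            refine Finset.sum_congr rfl fun k hk => ?_
            rw [(Finset.mem_filter.1 hk).2]
        _ = 1 := by
            rw [Finset.sum_add_distrib, ← Finset.mul_sum, Finset.sum_sub_distrib, h1, h2]; ring
  have h := mul_nonneg hMpos.le (hvi _ hmem)
  rw [dotProduct, Finset.mul_sum] at h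
  refine h.trans_eq (Finset.sum_congr rfl fun k _ => ?_)
  rw [qvec_apply, Pi.sub_apply]
  field_simp
  ring

/-- All equilibria induce the same link flow. -/
lemma linkFlow_unique [Fintype A] [Fintype K] [Fintype W] [DecidableEq W] [DecidableEq K]
    (Λ : Matrix A K ℝ) (od : K → W) (d : W → ℝ) (hd : ∀ w, 0 < d w)
    (u : (A → ℝ) → (A → ℝ))
    (hmono : ∀ x ∈ Xset Λ od d, ∀ x' ∈ Xset Λ od d, x ≠ x' →
      0 < (u x - u x') ⬝ᵥ (x - x'))
    {p p' : K → ℝ} (hp : p ∈ UEset Λ od d u) (hp' : p' ∈ UEset Λ od d u) :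
    (bLam Λ od d).mulVec p = (bLam Λ od d).mulVec p' := by
  by_contra hne
  have h := hmono _ ⟨p, hp.1, rfl⟩ _ ⟨p', hp'.1, rfl⟩ hne
  have h1 := weighted_vi Λ od d hd u hp hp'.1
  have h2 := weighted_vi Λ od d hd u hp' hp.1
  have e1 := sum_qvec_routeCost Λ od d u p (p' - p)
  have e2 := sum_qvec_routeCost Λ od d u p' (p - p')
  simp only [Pi.sub_apply] at e1 e2
  rw [e1, Matrix.mulVec_sub, dotProduct_sub] at h1
  rw [e2, Matrix.mulVec_sub, dotProduct_sub] at h2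
  rw [sub_dotProduct, dotProduct_sub, dotProduct_sub] at h
  linarith

lemma logit_denom_pos [Fintype K] [DecidableEq W] (od : K → W) (r : ℝ) (s : K → ℝ) (k : K) :
    0 < ∑ k' ∈ univ.filter (fun k' => od k' = od k), Real.exp (-r * s k') :=
  Finset.sum_pos (fun _ _ => Real.exp_pos _) ⟨k, by simp⟩

lemma logit_pos [Fintype K] [DecidableEq W] (od : K → W) (r : ℝ) (s : K → ℝ) (k : K) :
    0 < logit od r s k :=
  div_pos (Real.exp_pos _) (logit_denom_pos od r s k)

/-- Logit strategies are normalised on each OD pair. The hypothesis `hp` is needed only to ensure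
that every OD pair has a route. -/
lemma logit_sum [Fintype K] [DecidableEq W] (od : K → W) (r : ℝ) (s : K → ℝ)
    {p : K → ℝ} (hp : p ∈ Pset od) (w : W) : (Sig od).mulVec (logit od r s) w = 1 := by
  have hw := hp.2 w
  rw [Sig_mulVec_apply] at hw ⊢
  have hne : (univ.filter (fun k => od k = w)).Nonempty := by
    rw [Finset.nonempty_iff_ne_empty]
    intro h
    simp [h] at hw
  calc ∑ k ∈ univ.filter (fun k => od k = w), logit od r s k
      = ∑ k ∈ univ.filter (fun k => od k = w), Real.exp (-r * s k) /
          ∑ k' ∈ univ.filter (fun k' => od k' = w), Real.exp (-r * s k') := by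
        refine Finset.sum_congr rfl fun k hk => ?_
        rw [logit, (Finset.mem_filter.1 hk).2]
    _ = 1 := by
        rw [← Finset.sum_div]
        exact div_self (ne_of_gt (Finset.sum_pos (fun _ _ => Real.exp_pos _) hne))

/-- The log-probabilities are `-r s` up to normalisers, which depend only on the OD pair and
hence vanish against the difference of two strategies. -/
lemma sum_log_logit [Fintype K] [Fintype W] [DecidableEq W] (od : K → W) (d : W → ℝ)
    (r : ℝ) (s : K → ℝ) {p p' : K → ℝ} (hp : p ∈ Pset od) (hp' : p' ∈ Pset od) :
    ∑ k, qvec od d k * ((p k - p' k) * Real.log (logit od r s k))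
      = -r * ∑ k, qvec od d k * (s k * (p k - p' k)) := by
  have h0 := sum_od_mul_eq od (fun w => d w *
    Real.log (∑ k' ∈ univ.filter (fun k' => od k' = w), Real.exp (-r * s k'))) hp.2 hp'.2
  rw [Finset.mul_sum, ← sub_eq_zero, ← Finset.sum_sub_distrib, ← neg_eq_zero, ← h0,
    ← Finset.sum_neg_distrib]
  refine Finset.sum_congr rfl fun k _ => ?_
  rw [qvec_apply, logit, Real.log_div (Real.exp_pos _).ne' (logit_denom_pos od r s k).ne',
    Real.log_exp]
  ring

/-- The Gibbs inequality. -/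
lemma KLdiv_nonneg [Fintype K] [Fintype W] [DecidableEq W] (od : K → W) (d : W → ℝ)
    (hd : ∀ w, 0 < d w) {p p' : K → ℝ} (hp : p ∈ Pset od) (hpos : ∀ k, 0 < p' k)
    (hp' : ∀ w, (Sig od).mulVec p' w = 1) : 0 ≤ KLdiv od d p p' := by
  rw [← sum_od_mul_eq od d hp.2 hp', KLdiv]
  refine Finset.sum_le_sum fun k _ => ?_
  rw [qvec_apply]
  refine mul_le_mul_of_nonneg_left ?_ (hd _).le
  rcases (hp.1 k).eq_or_lt with h | h
  · rw [← h]
    have := hpos k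
    simp only [zero_mul]
    linarith
  · have h1 := Real.log_le_sub_one_of_pos (div_pos (hpos k) h)
    rw [Real.log_div (hpos k).ne' h.ne'] at h1
    have h2 := mul_le_mul_of_nonneg_left h1 h.le
    have h3 : p k * (p' k / p k - 1) = p' k - p k := by field_simp
    linarith

/-- Routes unused at the limit contribute nothing, so no continuity of `log` at zero is needed. -/
lemma KLdiv_tendsto_zero [Fintype K] [Fintype W] [DecidableEq W] (od : K → W) (d : W → ℝ)
    {p : ℕ → K → ℝ} {p' : K → ℝ} (h : Tendsto p atTop (nhds p')) :
    Tendsto (fun t => KLdiv od d p' (p t)) atTop (nhds 0) := by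
  have h0 : (0 : ℝ) = ∑ k : K, (0 : ℝ) := by simp
  rw [h0]
  refine tendsto_finsetSum _ fun k _ => ?_
  by_cases hk : p' k = 0
  · simp [hk]
  · have hl := ((tendsto_pi_nhds.1 h k).log hk).const_sub (Real.log (p' k))
    simpa using (hl.const_mul (p' k)).const_mul (qvec od d k)

/-- Theorem 1: let `p⁰ = q_r(s⁰)` be the initial strategy of the
CULO model and suppose the iterates `pᵗ` converge to `p* ∈ P*`. Then `p*` is the KL
projection of `p⁰` onto `P*`: it minimizes `D(·, p⁰)` over `P*`. -/
theorem statement7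
    [Fintype A] [Fintype W] [Fintype K] [DecidableEq W] [DecidableEq K]
    (Λ : Matrix A K ℝ) (od : K → W) (d : W → ℝ)
    (hΛ : ∀ a k, Λ a k = 0 ∨ Λ a k = 1)
    (hd : ∀ w, 0 < d w)
    (u : (A → ℝ) → (A → ℝ))
    (hu : ContDiffOn ℝ 1 u (Xset Λ od d))
    (hnonneg : ∀ x ∈ Xset Λ od d, ∀ a, 0 ≤ u x a)
    (hmono : ∀ x ∈ Xset Λ od d, ∀ x' ∈ Xset Λ od d, x ≠ x' →
      0 < (u x - u x') ⬝ᵥ (x - x'))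
    (r : ℝ) (hr : 0 < r)
    (η : ℕ → ℝ) (hη : ∀ t, 0 < η t)
    (s : ℕ → K → ℝ) (p : ℕ → K → ℝ)
    (hsdyn : ∀ t, s (t + 1) = s t + η (t + 1) • routeCost Λ od d u (p t))
    (hpdyn : ∀ t, p t = logit od r (s t))
    (pstar : K → ℝ) (hUE : pstar ∈ UEset Λ od d u)
    (hconv : Tendsto p atTop (nhds pstar)) :
    ∀ p' ∈ UEset Λ od d u, KLdiv od d pstar (p 0) ≤ KLdiv od d p' (p 0) := by
  intro p' hp'
  have hflow : (bLam Λ od d).mulVec (p' - pstar) = 0 := by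
    rw [Matrix.mulVec_sub, linkFlow_unique Λ od d hd u hmono hp' hUE, sub_self]
  have hs : ∀ t, ∑ k, qvec od d k * (s t k * (p' k - pstar k))
      = ∑ k, qvec od d k * (s 0 k * (p' k - pstar k)) := by
    intro t
    induction t with
    | zero => rfl
    | succ t ih =>
      have hc := sum_qvec_routeCost Λ od d u (p t) (p' - pstar)
      rw [hflow, dotProduct_zero] at hc
      rw [← ih, ← sub_eq_zero, ← Finset.sum_sub_distrib, ← mul_zero (η (t + 1)), ← hc,
        Finset.mul_sum]
      refine Finset.sum_congr rfl fun k _ => ?_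
      rw [hsdyn t]
      simp only [Pi.add_apply, Pi.smul_apply, Pi.sub_apply, smul_eq_mul]
      ring
  -- The part of the divergence gap depending on the second argument is the conserved pairing.
  have hgap : ∀ t, KLdiv od d p' (p t) - KLdiv od d pstar (p t)
      = negEnt od d p' - negEnt od d pstar
        + r * ∑ k, qvec od d k * (s t k * (p' k - pstar k)) := by
    intro t
    have hl := sum_log_logit od d r (s t) hp'.1 hUE.1
    rw [← hpdyn t] at hl
    have hexp : KLdiv od d p' (p t) - KLdiv od d pstar (p t)
        = negEnt od d p' - negEnt od d pstar
          - ∑ k, qvec od d k * ((p' k - pstar k) * Real.log (p t k)) := by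
      simp only [KLdiv, negEnt, ← Finset.sum_sub_distrib]
      exact Finset.sum_congr rfl fun k _ => by ring
    rw [hexp, hl]
    ring
  have hbound : ∀ t, -KLdiv od d pstar (p t)
      ≤ KLdiv od d p' (p 0) - KLdiv od d pstar (p 0) := by
    intro t
    have hnn : 0 ≤ KLdiv od d p' (p t) := by
      rw [hpdyn t]
      exact KLdiv_nonneg od d hd hp'.1 (logit_pos od r (s t)) (logit_sum od r (s t) hp'.1)
    have h1 := hgap t
    have h2 := hgap 0
    rw [hs t] at h1
    linarith
  have hlim := (KLdiv_tendsto_zero od d hconv).neg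
  rw [neg_zero] at hlim
  exact sub_nonneg.1 (le_of_tendsto' hlim hbound)
end
end

section
/- The KL projection map onto the UE set is continuous in the initial strategy: the map that assigns to each strictly positive p^0 ∈ P the unique minimizer of D(·, p^0) over P* is continuous on the set of strictly positive elements of P. -/
/-!
The variational inequality, stated with unweighted route costs, implies its `q`-weighted version
(`UEset_weighted`), because `q` is constant on the routes of an OD pair. Strict monotonicity of the
link cost then forces all equilibria to share one link flow (`UEset_flow_unique`), hence one route
cost vector, so that `P*` is cut out of the compact polytope `P` by linear conditions: it is
compact and convex.

On `P`, the function `D(·, p⁰)` is strictly convex, so its minimizer over the convex set `P*` is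
unique. Since `D` is jointly continuous for `p⁰ > 0`, every cluster point of `F p` as `p → p⁰` is
again a minimizer of `D(·, p⁰)`, hence equals `F p⁰`; by compactness of `P*`, `F` is continuous.
-/

open Matrix Filter Finset Topology

noncomputable section

variable {A W K : Type*}

lemma sig_mulVec [Fintype K] [DecidableEq W] (od : K → W) (p : K → ℝ) (w : W) :
    (Sig od).mulVec p w = ∑ k, if od k = w then p k else 0 := by
  simp [Sig, Matrix.mulVec, dotProduct]

lemma isClosed_Pset [Fintype K] [DecidableEq W] (od : K → W) :
    IsClosed (Pset od) := by
  have h : Pset od = (⋂ k, {p : K → ℝ | 0 ≤ p k}) ∩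
      ⋂ w : W, {p | (Sig od).mulVec p w = 1} := by
    ext p; simp [Pset]
  rw [h]
  refine (isClosed_iInter fun k => isClosed_le continuous_const (continuous_apply k)).inter
    (isClosed_iInter fun w => isClosed_eq ?_ continuous_const)
  simp only [sig_mulVec]
  refine continuous_finsetSum _ fun k _ => ?_
  split_ifs <;> fun_prop

lemma isCompact_Pset [Fintype K] [DecidableEq W] (od : K → W) :
    IsCompact (Pset od) := by
  refine (isCompact_Icc (a := (0 : K → ℝ)) (b := 1)).of_isClosed_subset (isClosed_Pset od) ?_
  rintro p ⟨h0, h1⟩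
  refine ⟨h0, fun k => ?_⟩
  have h := h1 (od k)
  rw [sig_mulVec] at h
  have h2 := Finset.single_le_sum
    (f := fun k' => if od k' = od k then p k' else 0) (s := Finset.univ)
    (fun k' _ => by split_ifs <;> simp [h0 k']) (Finset.mem_univ k)
  simpa [h] using h2

lemma convex_Pset [Fintype K] [DecidableEq W] (od : K → W) : Convex ℝ (Pset od) := by
  rintro p ⟨hp, hp'⟩ r ⟨hr, hr'⟩ a b ha hb hab
  refine ⟨fun k => ?_, fun w => ?_⟩
  · have := mul_nonneg ha (hp k)
    have := mul_nonneg hb (hr k)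
    simp only [Pi.add_apply, Pi.smul_apply, smul_eq_mul]
    linarith
  · simp [Matrix.mulVec_add, Matrix.mulVec_smul, hp', hr', hab]

/-- The variational inequality may be weighted by `q`: test it against
`p + t q (p' - p)`, which lies in `P` for small `t > 0` because `q` is constant on each OD pair. -/
lemma UEset_weighted [Fintype A] [Fintype W] [Fintype K] [DecidableEq W] [DecidableEq K]
    {Λ : Matrix A K ℝ} {od : K → W} {d : W → ℝ} (hd : ∀ w, 0 < d w)
    {u : (A → ℝ) → (A → ℝ)} {p p' : K → ℝ}
    (hp : p ∈ UEset Λ od d u) (hp' : p' ∈ Pset od) :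
    0 ≤ u ((bLam Λ od d).mulVec p) ⬝ᵥ
      ((bLam Λ od d).mulVec p' - (bLam Λ od d).mulVec p) := by
  obtain ⟨⟨h0, h1⟩, hvi⟩ := hp
  obtain ⟨h0', h1'⟩ := hp'
  have hS : 0 < 1 + ∑ w, d w := by
    have := Finset.sum_nonneg (s := Finset.univ) fun w _ => (hd w).le
    linarith
  set t : ℝ := (1 + ∑ w, d w)⁻¹ with ht
  have htpos : 0 < t := inv_pos.mpr hS
  have htd : ∀ w, t * d w ≤ 1 := fun w => by
    have := Finset.single_le_sum (f := d) (s := Finset.univ)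
      (fun w _ => (hd w).le) (Finset.mem_univ w)
    rw [ht, inv_mul_le_iff₀ hS]
    linarith
  have key := hvi (fun k => p k + t * (qvec od d k * (p' k - p k))) ⟨fun k => ?_, fun w => ?_⟩
  · have e : routeCost Λ od d u p ⬝ᵥ
        ((fun k => p k + t * (qvec od d k * (p' k - p k))) - p) =
        t * (u ((bLam Λ od d).mulVec p) ⬝ᵥ
          ((bLam Λ od d).mulVec p' - (bLam Λ od d).mulVec p)) := by
      have e1 : ((fun k => p k + t * (qvec od d k * (p' k - p k))) - p) =
          t • (Matrix.diagonal (qvec od d)).mulVec (p' - p) := by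
        ext k; simp [Matrix.mulVec_diagonal]
      rw [e1, ← Matrix.mulVec_sub, dotProduct_smul, smul_eq_mul, routeCost,
        Matrix.mulVec_transpose, ← Matrix.dotProduct_mulVec]
      simp only [bLam, Matrix.mulVec_mulVec]
    rw [e] at key
    exact nonneg_of_mul_nonneg_right key htpos
  · simp only [qvec_apply]
    have a := mul_nonneg (sub_nonneg.mpr (htd (od k))) (h0 k)
    have b := mul_nonneg (mul_nonneg htpos.le (hd (od k)).le) (h0' k)
    nlinarith
  · have h := h1 w
    have h' := h1' w
    rw [sig_mulVec] at h h' ⊢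
    have : ∀ k, (if od k = w then p k + t * (qvec od d k * (p' k - p k)) else 0) =
        (if od k = w then p k else 0) + t * d w *
          ((if od k = w then p' k else 0) - (if od k = w then p k else 0)) := fun k => by
      rw [qvec_apply]
      split_ifs with hk
      · rw [hk]; ring
      · ring
    simp_rw [this]
    rw [Finset.sum_add_distrib, ← Finset.mul_sum, Finset.sum_sub_distrib, h, h']
    ring

lemma UEset_flow_unique [Fintype A] [Fintype W] [Fintype K] [DecidableEq W] [DecidableEq K]
    {Λ : Matrix A K ℝ} {od : K → W} {d : W → ℝ} (hd : ∀ w, 0 < d w)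
    {u : (A → ℝ) → (A → ℝ)}
    (hmono : ∀ x ∈ Xset Λ od d, ∀ x' ∈ Xset Λ od d, x ≠ x' →
      0 < (u x - u x') ⬝ᵥ (x - x'))
    {p p' : K → ℝ} (hp : p ∈ UEset Λ od d u) (hp' : p' ∈ UEset Λ od d u) :
    (bLam Λ od d).mulVec p = (bLam Λ od d).mulVec p' := by
  by_contra hne
  have h := hmono _ ⟨p, hp.1, rfl⟩ _ ⟨p', hp'.1, rfl⟩ hne
  have h1 := UEset_weighted hd hp hp'.1
  have h2 := UEset_weighted hd hp' hp.1
  simp only [sub_dotProduct, dotProduct_sub] at h h1 h2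
  linarith

/-- Once one equilibrium `p₀` is known, the equilibria are the points of `P` with the same link
flow that satisfy the linear inequalities given by the common cost vector `c(p₀)`. -/
lemma mem_UEset_iff [Fintype A] [Fintype W] [Fintype K] [DecidableEq W] [DecidableEq K]
    {Λ : Matrix A K ℝ} {od : K → W} {d : W → ℝ} (hd : ∀ w, 0 < d w)
    {u : (A → ℝ) → (A → ℝ)}
    (hmono : ∀ x ∈ Xset Λ od d, ∀ x' ∈ Xset Λ od d, x ≠ x' →
      0 < (u x - u x') ⬝ᵥ (x - x'))
    {p₀ : K → ℝ} (hp₀ : p₀ ∈ UEset Λ od d u) (p : K → ℝ) :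
    p ∈ UEset Λ od d u ↔ p ∈ Pset od ∧
      (bLam Λ od d).mulVec p = (bLam Λ od d).mulVec p₀ ∧
      ∀ p' ∈ Pset od, routeCost Λ od d u p₀ ⬝ᵥ p ≤ routeCost Λ od d u p₀ ⬝ᵥ p' := by
  have hc : (bLam Λ od d).mulVec p = (bLam Λ od d).mulVec p₀ →
      routeCost Λ od d u p = routeCost Λ od d u p₀ := fun h => by simp only [routeCost, h]
  constructor
  · intro hp
    have hx := UEset_flow_unique hd hmono hp hp₀
    refine ⟨hp.1, hx, fun p' hp' => ?_⟩
    have := hp.2 p' hp'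
    rw [hc hx, dotProduct_sub] at this
    linarith
  · rintro ⟨hp, hx, h⟩
    refine ⟨hp, fun p' hp' => ?_⟩
    rw [hc hx, dotProduct_sub]
    linarith [h p' hp']

lemma isCompact_UEset [Fintype A] [Fintype W] [Fintype K] [DecidableEq W] [DecidableEq K]
    {Λ : Matrix A K ℝ} {od : K → W} {d : W → ℝ} (hd : ∀ w, 0 < d w)
    {u : (A → ℝ) → (A → ℝ)}
    (hmono : ∀ x ∈ Xset Λ od d, ∀ x' ∈ Xset Λ od d, x ≠ x' →
      0 < (u x - u x') ⬝ᵥ (x - x')) :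
    IsCompact (UEset Λ od d u) := by
  rcases (UEset Λ od d u).eq_empty_or_nonempty with h | ⟨p₀, hp₀⟩
  · rw [h]; exact isCompact_empty
  refine (isCompact_Pset od).of_isClosed_subset ?_ fun p hp => hp.1
  have h : UEset Λ od d u = Pset od ∩
      ({p | (bLam Λ od d).mulVec p = (bLam Λ od d).mulVec p₀} ∩
      ⋂ p' ∈ Pset od, {p | routeCost Λ od d u p₀ ⬝ᵥ p ≤ routeCost Λ od d u p₀ ⬝ᵥ p'}) := by
    ext p
    rw [mem_UEset_iff hd hmono hp₀]
    simp
  rw [h]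
  refine (isClosed_Pset od).inter ((isClosed_eq ?_ continuous_const).inter
    (isClosed_biInter fun p' _ => isClosed_le ?_ continuous_const))
  · exact Continuous.matrix_mulVec continuous_const continuous_id
  · exact Continuous.dotProduct continuous_const continuous_id

lemma convex_UEset [Fintype A] [Fintype W] [Fintype K] [DecidableEq W] [DecidableEq K]
    {Λ : Matrix A K ℝ} {od : K → W} {d : W → ℝ} (hd : ∀ w, 0 < d w)
    {u : (A → ℝ) → (A → ℝ)}
    (hmono : ∀ x ∈ Xset Λ od d, ∀ x' ∈ Xset Λ od d, x ≠ x' →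
      0 < (u x - u x') ⬝ᵥ (x - x')) :
    Convex ℝ (UEset Λ od d u) := by
  intro p hp r hr a b ha hb hab
  obtain ⟨hpP, -, hpc⟩ := (mem_UEset_iff hd hmono hp p).1 hp
  obtain ⟨hrP, hrx, hrc⟩ := (mem_UEset_iff hd hmono hp r).1 hr
  refine (mem_UEset_iff hd hmono hp _).2 ⟨convex_Pset od hpP hrP ha hb hab, ?_, fun p' hp' => ?_⟩
  · rw [Matrix.mulVec_add, Matrix.mulVec_smul, Matrix.mulVec_smul, hrx, ← add_smul, hab, one_smul]
  · rw [dotProduct_add, dotProduct_smul, dotProduct_smul, smul_eq_mul, smul_eq_mul]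
    have h1 := mul_le_mul_of_nonneg_left (hpc p' hp') ha
    have h2 := mul_le_mul_of_nonneg_left (hrc p' hp') hb
    have h3 : a * (routeCost Λ od d u p ⬝ᵥ p') + b * (routeCost Λ od d u p ⬝ᵥ p') =
      routeCost Λ od d u p ⬝ᵥ p' := by rw [← add_mul, hab, one_mul]
    linarith

lemma KLdiv_strictConvexOn [Fintype W] [Fintype K] [DecidableEq W]
    {od : K → W} {d : W → ℝ} (hd : ∀ w, 0 < d w) (p0 : K → ℝ) :
    StrictConvexOn ℝ (Pset od) fun p => KLdiv od d p p0 := by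
  refine ⟨convex_Pset od, fun p hp r hr hne a b ha hb hab => ?_⟩
  have hq : ∀ k, 0 < qvec od d k := fun k => by rw [qvec_apply]; exact hd _
  obtain ⟨j, hj⟩ := Function.ne_iff.1 hne
  simp only [KLdiv, smul_eq_mul, Finset.mul_sum, ← Finset.sum_add_distrib, Pi.add_apply,
    Pi.smul_apply]
  refine Finset.sum_lt_sum (fun k _ => ?_) ⟨j, Finset.mem_univ j, ?_⟩
  · have h := Real.strictConvexOn_mul_log.convexOn.2 (hp.1 k) (hr.1 k) ha.le hb.le hab
    simp only [smul_eq_mul] at h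
    have := mul_le_mul_of_nonneg_left h (hq k).le
    linarith
  · have h := Real.strictConvexOn_mul_log.2 (hp.1 j) (hr.1 j) hj ha hb hab
    simp only [smul_eq_mul] at h
    have := mul_lt_mul_of_pos_left h (hq j)
    linarith

/-- Joint continuity of the divergence at a strictly positive second argument. Zeros of the first
argument are harmless since `x ↦ x * log x` is continuous on `ℝ`. -/
lemma tendsto_KLdiv [Fintype W] [Fintype K] [DecidableEq W] (od : K → W) (d : W → ℝ)
    {ι : Type*} {l : Filter ι} {f g : ι → K → ℝ} {y p0 : K → ℝ} (hp0 : ∀ k, 0 < p0 k)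
    (hf : Tendsto f l (𝓝 y)) (hg : Tendsto g l (𝓝 p0)) :
    Tendsto (fun i => KLdiv od d (f i) (g i)) l (𝓝 (KLdiv od d y p0)) := by
  simp only [KLdiv, mul_sub]
  rw [tendsto_pi_nhds] at hf hg
  refine tendsto_finsetSum _ fun k _ => Tendsto.sub ?_ ?_
  · exact (((Real.continuous_mul_log.tendsto (y k)).comp (hf k))).const_mul _
  · exact ((hf k).mul ((hg k).log (hp0 k).ne')).const_mul _

/-- Corollary 2: the KL projection map onto the UE set is continuous
in the initial strategy: any map `F` assigning to each strictly positive `p⁰ ∈ P` the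
(unique) minimizer of `D(·, p⁰)` over `P*` is continuous on the set of strictly
positive elements of `P`. -/
theorem statement9
    [Fintype A] [Fintype W] [Fintype K] [DecidableEq W] [DecidableEq K]
    (Λ : Matrix A K ℝ) (od : K → W) (d : W → ℝ)
    (hΛ : ∀ a k, Λ a k = 0 ∨ Λ a k = 1)
    (hd : ∀ w, 0 < d w)
    (u : (A → ℝ) → (A → ℝ))
    (hu : ContinuousOn u (Xset Λ od d))
    (hmono : ∀ x ∈ Xset Λ od d, ∀ x' ∈ Xset Λ od d, x ≠ x' →
      0 < (u x - u x') ⬝ᵥ (x - x'))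
    (hne : (UEset Λ od d u).Nonempty)
    (F : (K → ℝ) → (K → ℝ))
    (hF : ∀ p0 ∈ {p ∈ Pset od | ∀ k, 0 < p k},
      F p0 ∈ UEset Λ od d u ∧
      ∀ p ∈ UEset Λ od d u, KLdiv od d (F p0) p0 ≤ KLdiv od d p p0) :
    ContinuousOn F {p ∈ Pset od | ∀ k, 0 < p k} := by
  intro p0 hp0
  obtain ⟨hFmem, hFmin⟩ := hF p0 hp0
  refine (isCompact_UEset hd hmono).tendsto_nhds_of_unique_mapClusterPt
    (eventually_mem_nhdsWithin.mono fun p hp => (hF p hp).1) fun y hy hcl => ?_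
  obtain ⟨U, hU, hUy⟩ := mapClusterPt_iff_ultrafilter.1 hcl
  have hU0 : Tendsto id (U : Filter (K → ℝ)) (𝓝 p0) := hU.trans nhdsWithin_le_nhds
  have hymin : ∀ p ∈ UEset Λ od d u, KLdiv od d y p0 ≤ KLdiv od d p p0 := fun p hp =>
    le_of_tendsto_of_tendsto (tendsto_KLdiv od d hp0.2 hUy hU0)
      (tendsto_KLdiv od d hp0.2 tendsto_const_nhds hU0)
      (hU (eventually_mem_nhdsWithin.mono fun p' hp' => (hF p' hp').2 p hp))
  exact ((KLdiv_strictConvexOn hd p0).subset (fun p hp => hp.1)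
    (convex_UEset hd hmono)).eq_of_isMinOn hymin hFmin hy hFmem
end
end

section
/- Let s : ℝ → ℝ^K be differentiable and satisfy the continuous-time CULO dynamic ṡ(t) = c(p(t)) with p(t) = q_r(s(t)). Then p is differentiable and, for every OD pair w and every route k serving w, ṗ_k(t) = −r·p_k(t)·(c_k(p(t)) − Σ_{k' serving w} p_{k'}(t)·c_{k'}(p(t))); equivalently, ṗ_k/r equals the right-hand side of the replicator (proportional pairwise comparison) dynamic: p_k·Σ_{k'≠k, k' serving w} p_{k'}·[c_{k'}(p) − c_k(p)]₊ − p_k·Σ_{k'≠k, k' serving w} p_{k'}·[c_k(p) − c_{k'}(p)]₊. -/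
/-!
The first claim is the quotient rule for `pₖ = exp (-r sₖ) / Z`, where `Z` is the partition
function of the OD pair of `k`: the logarithmic derivative of the numerator is `-r cₖ`, and that of
`Z` is `-r` times the `p`-average of the costs (`hasDerivAt_logit`).

The second claim is algebra: `[a]₊ - [-a]₊ = a` collapses the difference of inflow and outflow to
`∑ p_{k'} (c_{k'} - cₖ)` over the OD pair (the term `k' = k` vanishes), and `∑ p_{k'} = 1` turns
this into the average cost minus `cₖ` (`pairwise_comparison_eq`).
-/

open Matrix Filter Finset Topology

noncomputable section

variable {A W K : Type*}

lemma logit_partition_pos [Fintype K] [DecidableEq W] (od : K → W) (r : ℝ) (s : K → ℝ) (k : K) :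
    0 < ∑ k' ∈ Finset.univ.filter (fun k' => od k' = od k), Real.exp (-r * s k') :=
  Finset.sum_pos (fun _ _ => Real.exp_pos _) ⟨k, by simp⟩

/-- On the routes of the OD pair of `k`, all logit components share one denominator. -/
lemma sum_logit_mul [Fintype K] [DecidableEq W] (od : K → W) (r : ℝ) (s c : K → ℝ) (k : K) :
    ∑ k' ∈ Finset.univ.filter (fun k' => od k' = od k), logit od r s k' * c k' =
      (∑ k' ∈ Finset.univ.filter (fun k' => od k' = od k), Real.exp (-r * s k') * c k') /
        ∑ k' ∈ Finset.univ.filter (fun k' => od k' = od k), Real.exp (-r * s k') := by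
  rw [Finset.sum_div]
  refine Finset.sum_congr rfl fun j hj => ?_
  have hj' : od j = od k := (Finset.mem_filter.mp hj).2
  rw [logit, hj', div_mul_eq_mul_div]

lemma sum_logit [Fintype K] [DecidableEq W] (od : K → W) (r : ℝ) (s : K → ℝ) (k : K) :
    ∑ k' ∈ Finset.univ.filter (fun k' => od k' = od k), logit od r s k' = 1 := by
  have h := sum_logit_mul od r s (fun _ => 1) k
  simp only [mul_one] at h
  rw [h, div_self (logit_partition_pos od r s k).ne']

lemma hasDerivAt_logit [Fintype K] [DecidableEq W] (od : K → W) (r : ℝ)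
    (s : ℝ → K → ℝ) (c : K → ℝ) (t : ℝ)
    (hs : ∀ k, HasDerivAt (fun τ => s τ k) (c k) t) (k : K) :
    HasDerivAt (fun τ => logit od r (s τ) k)
      (-r * logit od r (s t) k * (c k -
        ∑ k' ∈ Finset.univ.filter (fun k' => od k' = od k), logit od r (s t) k' * c k')) t := by
  have hexp : ∀ j, HasDerivAt (fun τ => Real.exp (-r * s τ j))
      (Real.exp (-r * s t j) * (-r * c j)) t := fun j => ((hs j).const_mul (-r)).exp
  have hZ : HasDerivAt
      (fun τ => ∑ k' ∈ Finset.univ.filter (fun k' => od k' = od k), Real.exp (-r * s τ k'))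
      (-r * ∑ k' ∈ Finset.univ.filter (fun k' => od k' = od k),
        Real.exp (-r * s t k') * c k') t := by
    refine (HasDerivAt.fun_sum fun j _ => hexp j).congr_deriv ?_
    rw [Finset.mul_sum]
    exact Finset.sum_congr rfl fun j _ => by ring
  have hpos := (logit_partition_pos od r (s t) k).ne'
  refine ((hexp k).fun_div hZ hpos).congr_deriv ?_
  rw [sum_logit_mul, logit]
  -- Naming the sums keeps `field_simp` from rewriting inside them.
  generalize ∑ k' ∈ Finset.univ.filter (fun k' => od k' = od k),
    Real.exp (-r * s t k') = Z at hpos ⊢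
  generalize ∑ k' ∈ Finset.univ.filter (fun k' => od k' = od k),
    Real.exp (-r * s t k') * c k' = N
  field_simp
  ring

lemma pairwise_comparison_eq [Fintype K] [DecidableEq W] [DecidableEq K] (od : K → W)
    (p c : K → ℝ) (k : K)
    (hp : ∑ k' ∈ Finset.univ.filter (fun k' => od k' = od k), p k' = 1) :
    (∑ k' ∈ Finset.univ.filter (fun k' => od k' = od k ∧ k' ≠ k), p k' * max (c k' - c k) 0) -
      (∑ k' ∈ Finset.univ.filter (fun k' => od k' = od k ∧ k' ≠ k), p k' * max (c k - c k') 0) =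
    (∑ k' ∈ Finset.univ.filter (fun k' => od k' = od k), p k' * c k') - c k := by
  have hmax : ∀ a b : ℝ, max (a - b) 0 - max (b - a) 0 = a - b := fun a b => by
    have h := posPart_sub_negPart (a - b)
    rwa [posPart_def, negPart_def, neg_sub] at h
  calc _ = ∑ k' ∈ Finset.univ.filter (fun k' => od k' = od k ∧ k' ≠ k), p k' * (c k' - c k) := by
        rw [← Finset.sum_sub_distrib]
        exact Finset.sum_congr rfl fun j _ => by rw [← mul_sub, hmax]
    _ = ∑ k' ∈ Finset.univ.filter (fun k' => od k' = od k), p k' * (c k' - c k) := by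
        refine Finset.sum_subset (fun j hj => by simp_all) fun j hj hj' => ?_
        have hjk : j = k := by
          simp only [Finset.mem_filter, Finset.mem_univ, true_and] at hj hj'
          tauto
        simp [hjk]
    _ = _ := by
        simp only [mul_sub, Finset.sum_sub_distrib]
        rw [← Finset.sum_mul, hp, one_mul]

/-- Equation (26): if `s : ℝ → ℝ^K` satisfies the continuous-time
CULO dynamic `ṡ = c(p)`, `p = q_r(s)`, then `p` is differentiable with
`ṗₖ = −r·pₖ·(cₖ(p) − ∑_{k' serving the same OD} p_{k'}·c_{k'}(p))`, and this quantity
equals `r` times the right-hand side of the replicator (proportional pairwise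
comparison) dynamic. -/
theorem statement18
    [Fintype A] [Fintype W] [Fintype K] [DecidableEq W] [DecidableEq K]
    (Λ : Matrix A K ℝ) (od : K → W) (d : W → ℝ)
    (hΛ : ∀ a k, Λ a k = 0 ∨ Λ a k = 1)
    (hd : ∀ w, 0 < d w)
    (u : (A → ℝ) → (A → ℝ))
    (hu : ContinuousOn u (Xset Λ od d))
    (r : ℝ) (hr : 0 < r)
    (s : ℝ → K → ℝ) (p : ℝ → K → ℝ)
    (hp : ∀ t, p t = logit od r (s t))
    (hs : ∀ k t, HasDerivAt (fun τ => s τ k) (routeCost Λ od d u (p t) k) t) :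
    ∀ k t,
      HasDerivAt (fun τ => p τ k)
        (-r * p t k * (routeCost Λ od d u (p t) k -
          ∑ k' ∈ Finset.univ.filter (fun k' => od k' = od k),
            p t k' * routeCost Λ od d u (p t) k')) t ∧
      -r * p t k * (routeCost Λ od d u (p t) k -
          ∑ k' ∈ Finset.univ.filter (fun k' => od k' = od k),
            p t k' * routeCost Λ od d u (p t) k')
        = r * (p t k *
            (∑ k' ∈ Finset.univ.filter (fun k' => od k' = od k ∧ k' ≠ k),
              p t k' *
                max (routeCost Λ od d u (p t) k' - routeCost Λ od d u (p t) k) 0)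
          - p t k *
            (∑ k' ∈ Finset.univ.filter (fun k' => od k' = od k ∧ k' ≠ k),
              p t k' *
                max (routeCost Λ od d u (p t) k - routeCost Λ od d u (p t) k') 0)) := by
  intro k t
  refine ⟨?_, ?_⟩
  · simp only [hp] at hs ⊢
    exact hasDerivAt_logit od r s _ t (fun j => hs j t) k
  · have hsum : ∑ k' ∈ Finset.univ.filter (fun k' => od k' = od k), p t k' = 1 := by
      rw [hp]
      exact sum_logit od r (s t) k
    rw [← mul_sub, pairwise_comparison_eq od (p t) (routeCost Λ od d u (p t)) k hsum]
    ring
end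
end
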